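/- Let u₁, u₂, u₃ ∈ ℝ² be pairwise distinct unit vectors, directions of the three half-lines {s·uᵢ : s ≥ 0} of a conical triod with vertex at the origin. Let ρ be the counterclockwise rotation by 60°, W_k := ρ^k(2/√3, 0) for k = 0,…,5 the vertices of B^φ, and F_k the closed facet of B^φ joining W_k and W_{k+1} (indices mod 6). Then the triod is critical — i.e. there exist N₁, N₂, N₃ ∈ ℝ² with φ(Nᵢ) = 1, Nᵢ·uᵢ^⊥ = φ°(uᵢ^⊥) for each i, and N₁ + N₂ + N₃ = 0 — if and only if the three points uᵢ/φ(uᵢ) ∈ ∂B^φ lie in three pairwise non-adjacent facets of ∂B^φ, i.e. there exist k ∈ {0,…,5} and a bijection σ : {1,2,3} → {0,1,2} such that uᵢ/φ(uᵢ) ∈ F_{(k + 2σ(i)) mod 6} for each i. -/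

import Mathlib

/-!
Write `W k` for the vertices of the hexagon. In the coordinates `s • W k + t • W (k + 1)` the norm
is `max |s| (max |t| |s + t|)` for every `k`, since `W (k + 2) = W (k + 1) - W k`, and
`φ°(x^⊥) = 2 / √3 * φ x`. Hence `W (k + 2)` is a Cahn–Hoffman vector for `u` exactly when `u` lies
in the cone over the facet `F_k`. Since three alternating vertices have sum zero, directions in
three pairwise non-adjacent facets admit a balanced triple.

Conversely, cut the hexagon into half-open facets `[W m, W (m + 1))`. If `N` in such a facet is a
Cahn–Hoffman vector for `u`, then by linearity so is `W m`. Two points of the hexagon whose sum is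
again on the hexagon lie in half-open facets whose indices differ by `2` or `4` modulo `6`. Any two
vectors of a balanced triple have this property, so the facets of the three vectors alternate.
-/

/-- The crystalline norm `φ` whose unit ball is the regular hexagon circumscribed
to the unit circle with two horizontal facets. -/
noncomputable def phi (x : ℝ × ℝ) : ℝ :=
  max |x.2| (max (|Real.sqrt 3 * x.1 + x.2| / 2) (|Real.sqrt 3 * x.1 - x.2| / 2))

/-- The dual norm `φ°`. -/
noncomputable def phiD (ξ : ℝ × ℝ) : ℝ :=
  max (2 * |ξ.1| / Real.sqrt 3) (max |ξ.1 / Real.sqrt 3 + ξ.2| |ξ.1 / Real.sqrt 3 - ξ.2|)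

/-- Counterclockwise rotation by 90°. -/
def perp (x : ℝ × ℝ) : ℝ × ℝ := (-x.2, x.1)

/-- Euclidean scalar product on `ℝ × ℝ`. -/
def dot (x y : ℝ × ℝ) : ℝ := x.1 * y.1 + x.2 * y.2

/-- Counterclockwise rotation by 60°. -/
noncomputable def rot60 (x : ℝ × ℝ) : ℝ × ℝ :=
  (x.1 / 2 - Real.sqrt 3 / 2 * x.2, Real.sqrt 3 / 2 * x.1 + x.2 / 2)

/-- The `k`-th vertex `W_k = ρ^k (2/√3, 0)` of the Wulff shape `B^φ`. -/
noncomputable def wulffVertex (k : ℕ) : ℝ × ℝ := rot60^[k] ((2 / Real.sqrt 3 : ℝ), (0 : ℝ))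

/-- The `k`-th closed facet of `∂B^φ`, joining `W_k` and `W_{k+1}`. -/
noncomputable def wulffFacet (k : ℕ) : Set (ℝ × ℝ) :=
  segment ℝ (wulffVertex k) (wulffVertex (k + 1))

/-- `N` is a Cahn–Hoffman vector for the half-line of direction `u`: it lies on `∂B^φ` and attains
the supremum that defines `φ°(u^⊥)`. -/
def IsCahnHoffman (N u : ℝ × ℝ) : Prop :=
  phi N = 1 ∧ dot N (perp u) = phiD (perp u)

/-- The point with coordinates `(s, t)` in the basis `W k, W (k + 1)` of the plane. -/
noncomputable def hexPoint (k : ℕ) (s t : ℝ) : ℝ × ℝ :=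
  s • wulffVertex k + t • wulffVertex (k + 1)

/-- The closed convex cone over the facet `F_k`. -/
def wulffCone (k : ℕ) : Set (ℝ × ℝ) :=
  {x | ∃ s t, 0 ≤ s ∧ 0 ≤ t ∧ hexPoint k s t = x}

/-- The half-open facet `[W k, W (k + 1))`. It omits its second endpoint, so that the six of them
partition `∂B^φ`. -/
def wulffHalfFacet (k : ℕ) : Set (ℝ × ℝ) :=
  {x | ∃ s t, 0 < s ∧ 0 ≤ t ∧ s + t = 1 ∧ hexPoint k s t = x}

theorem rot60_rot60 (x : ℝ × ℝ) : rot60 (rot60 x) = rot60 x - x := by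
  have h3 : √3 ^ 2 = 3 := Real.sq_sqrt (by norm_num)
  ext <;> simp only [rot60, Prod.fst_sub, Prod.snd_sub]
  · linear_combination -x.1 / 4 * h3
  · linear_combination -x.2 / 4 * h3

theorem wulffVertex_zero : wulffVertex 0 = (2 / √3, 0) := rfl

theorem wulffVertex_one : wulffVertex 1 = (1 / √3, 1) := by
  ext
  · simp only [wulffVertex, Function.iterate_one, rot60]
    ring
  · simp [wulffVertex, rot60]

theorem wulffVertex_add_two (k : ℕ) :
    wulffVertex (k + 2) = wulffVertex (k + 1) - wulffVertex k := by
  simp only [wulffVertex, Function.iterate_succ_apply', rot60_rot60]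

theorem wulffVertex_add_three (k : ℕ) : wulffVertex (k + 3) = -wulffVertex k := by
  rw [wulffVertex_add_two, wulffVertex_add_two]
  abel

theorem wulffVertex_periodic : Function.Periodic wulffVertex 6 := fun k => by
  rw [wulffVertex_add_three (k + 3), wulffVertex_add_three, neg_neg]

theorem wulffFacet_periodic : Function.Periodic wulffFacet 6 := fun k => by
  rw [wulffFacet, wulffFacet, add_right_comm, wulffVertex_periodic, wulffVertex_periodic]

theorem wulffVertex_add_alternating (k : ℕ) :
    wulffVertex k + wulffVertex (k + 2) + wulffVertex (k + 4) = 0 := by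
  rw [wulffVertex_add_three (k + 1), wulffVertex_add_two]
  abel

theorem hexPoint_zero (s t : ℝ) : hexPoint 0 s t = ((2 * s + t) / √3, t) := by
  ext
  · simp only [hexPoint, wulffVertex_zero, wulffVertex_one, zero_add, Prod.fst_add, Prod.smul_fst,
      smul_eq_mul]
    ring
  · simp [hexPoint, wulffVertex_zero, wulffVertex_one]

theorem hexPoint_succ (k : ℕ) (s t : ℝ) : hexPoint (k + 1) s t = hexPoint k (-t) (s + t) := by
  simp only [hexPoint, wulffVertex_add_two]
  module

theorem hexPoint_eq_hexPoint_succ (k : ℕ) (s t : ℝ) :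
    hexPoint k s t = hexPoint (k + 1) (s + t) (-s) := by
  rw [hexPoint_succ]
  congr 1 <;> ring

theorem hexPoint_add_three (k : ℕ) (s t : ℝ) : hexPoint (k + 3) s t = hexPoint k (-s) (-t) := by
  simp only [hexPoint, add_right_comm k 3 1, wulffVertex_add_three]
  module

theorem hexPoint_add (k : ℕ) (s t a b : ℝ) :
    hexPoint k s t + hexPoint k a b = hexPoint k (s + a) (t + b) := by
  simp only [hexPoint]
  module

theorem smul_hexPoint (k : ℕ) (r s t : ℝ) : r • hexPoint k s t = hexPoint k (r * s) (r * t) := by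
  simp only [hexPoint]
  module

theorem wulffVertex_eq_hexPoint (k : ℕ) : wulffVertex k = hexPoint k 1 0 := by
  simp [hexPoint]

theorem wulffVertex_add_two_eq_hexPoint (k : ℕ) : wulffVertex (k + 2) = hexPoint k (-1) 1 := by
  rw [hexPoint, wulffVertex_add_two]
  module

theorem exists_hexPoint_eq (k : ℕ) (x : ℝ × ℝ) : ∃ s t, hexPoint k s t = x := by
  induction k with
  | zero =>
    refine ⟨(√3 * x.1 - x.2) / 2, x.2, ?_⟩
    rw [hexPoint_zero]
    ext
    · field_simp
      ring
    · rfl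
  | succ k ih =>
    obtain ⟨s, t, rfl⟩ := ih
    exact ⟨s + t, -s, (hexPoint_eq_hexPoint_succ k s t).symm⟩

theorem phi_hexPoint (k : ℕ) (s t : ℝ) : phi (hexPoint k s t) = max |s| (max |t| |s + t|) := by
  induction k generalizing s t with
  | zero =>
    have hsum : √3 * ((2 * s + t) / √3) + t = 2 * (s + t) := by field_simp; ring
    have hdiff : √3 * ((2 * s + t) / √3) - t = 2 * s := by field_simp; ring
    have half (y : ℝ) : |2 * y| / 2 = |y| := by rw [abs_mul, abs_two]; ring
    rw [hexPoint_zero, phi, hsum, hdiff, half, half]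
    ac_rfl
  | succ k ih =>
    rw [hexPoint_succ, ih, abs_neg, neg_add_cancel_comm_assoc]
    ac_rfl

theorem phi_hexPoint_of_nonneg (k : ℕ) {s t : ℝ} (hs : 0 ≤ s) (ht : 0 ≤ t) :
    phi (hexPoint k s t) = s + t := by
  rw [phi_hexPoint, abs_of_nonneg hs, abs_of_nonneg ht, abs_of_nonneg (add_nonneg hs ht),
    max_eq_right (le_add_of_nonneg_left hs), max_eq_right (le_add_of_nonneg_right ht)]

theorem phi_wulffVertex (k : ℕ) : phi (wulffVertex k) = 1 := by
  rw [wulffVertex_eq_hexPoint, phi_hexPoint_of_nonneg k zero_le_one le_rfl, add_zero]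

theorem phi_neg (x : ℝ × ℝ) : phi (-x) = phi x := by
  obtain ⟨s, t, rfl⟩ := exists_hexPoint_eq 0 x
  rw [← neg_one_smul ℝ, smul_hexPoint, phi_hexPoint, phi_hexPoint, ← mul_add]
  simp only [neg_one_mul, abs_neg]

theorem phi_pos {x : ℝ × ℝ} (hx : x ≠ 0) : 0 < phi x := by
  obtain ⟨s, t, rfl⟩ := exists_hexPoint_eq 0 x
  contrapose! hx
  rw [phi_hexPoint, max_le_iff, max_le_iff, abs_nonpos_iff, abs_nonpos_iff] at hx
  simp [hexPoint, hx.1, hx.2.1]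

theorem dot_add_smul_left (a b : ℝ) (x y z : ℝ × ℝ) :
    dot (a • x + b • y) z = a * dot x z + b * dot y z := by
  simp only [dot, Prod.fst_add, Prod.snd_add, Prod.smul_fst, Prod.smul_snd, smul_eq_mul]
  ring

theorem dot_hexPoint_perp_hexPoint (k : ℕ) (s t a b : ℝ) :
    dot (hexPoint k s t) (perp (hexPoint k a b)) = 2 / √3 * (t * a - s * b) := by
  induction k generalizing s t a b with
  | zero =>
    simp only [hexPoint_zero, dot, perp]
    ring
  | succ k ih =>
    rw [hexPoint_succ, hexPoint_succ, ih]
    ring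

theorem phiD_perp (x : ℝ × ℝ) : phiD (perp x) = 2 / √3 * phi x := by
  obtain ⟨s, t, rfl⟩ := exists_hexPoint_eq 0 x
  have scale (y : ℝ) : |2 / √3 * y| = 2 / √3 * |y| := by
    rw [abs_mul, abs_of_pos (by positivity)]
  have hfst : 2 * |-t| / √3 = 2 / √3 * |t| := by rw [abs_neg]; ring
  have hsum : -t / √3 + (2 * s + t) / √3 = 2 / √3 * s := by ring
  have hdiff : -t / √3 - (2 * s + t) / √3 = -(2 / √3 * (s + t)) := by ring
  rw [phi_hexPoint, hexPoint_zero, perp, phiD]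
  dsimp only
  rw [hfst, hsum, hdiff, abs_neg, scale, scale, ← mul_max_of_nonneg _ _ (by positivity),
    ← mul_max_of_nonneg _ _ (by positivity), max_left_comm]

theorem dot_wulffVertex_perp_le_phiD_perp (k : ℕ) (x : ℝ × ℝ) :
    dot (wulffVertex k) (perp x) ≤ phiD (perp x) := by
  obtain ⟨s, t, rfl⟩ := exists_hexPoint_eq k x
  rw [phiD_perp, wulffVertex_eq_hexPoint, dot_hexPoint_perp_hexPoint, phi_hexPoint]
  gcongr
  linarith [neg_le_abs t, le_max_left |t| |s + t|, le_max_right |s| (max |t| |s + t|)]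

theorem isCahnHoffman_wulffVertex_iff_mem_wulffCone (k : ℕ) (u : ℝ × ℝ) :
    IsCahnHoffman (wulffVertex (k + 2)) u ↔ u ∈ wulffCone k := by
  have key (s t : ℝ) : IsCahnHoffman (wulffVertex (k + 2)) (hexPoint k s t) ↔
      s + t = phi (hexPoint k s t) := by
    rw [IsCahnHoffman, and_iff_right (phi_wulffVertex _), phiD_perp,
      wulffVertex_add_two_eq_hexPoint, dot_hexPoint_perp_hexPoint,
      mul_right_inj' (by positivity), one_mul, neg_one_mul, sub_neg_eq_add]
  constructor
  · intro h
    obtain ⟨s, t, rfl⟩ := exists_hexPoint_eq k u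
    rw [key, phi_hexPoint] at h
    have hs : |s| ≤ s + t := h ▸ le_max_left _ _
    have ht : |t| ≤ s + t := h ▸ (le_max_left _ _).trans (le_max_right _ _)
    exact ⟨s, t, by linarith [le_abs_self t], by linarith [le_abs_self s], rfl⟩
  · rintro ⟨s, t, hs, ht, rfl⟩
    rw [key, phi_hexPoint_of_nonneg k hs ht]

theorem inv_phi_smul_mem_wulffFacet_iff {u : ℝ × ℝ} (hu : u ≠ 0) (k : ℕ) :
    (phi u)⁻¹ • u ∈ wulffFacet k ↔ u ∈ wulffCone k := by
  have hpos := phi_pos hu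
  constructor
  · rintro ⟨s, t, hs, ht, -, hst⟩
    refine ⟨phi u * s, phi u * t, by positivity, by positivity, ?_⟩
    rw [← smul_hexPoint, hexPoint, hst, smul_inv_smul₀ hpos.ne']
  · rintro ⟨s, t, hs, ht, rfl⟩
    refine ⟨_, _, by positivity, by positivity, ?_, (smul_hexPoint k _ s t).symm⟩
    rw [← mul_add, ← phi_hexPoint_of_nonneg k hs ht, inv_mul_cancel₀ hpos.ne']

theorem isCahnHoffman_wulffVertex_iff_mem_wulffFacet {u : ℝ × ℝ} (hu : u ≠ 0) (k : ℕ) :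
    IsCahnHoffman (wulffVertex (k + 2)) u ↔ (phi u)⁻¹ • u ∈ wulffFacet k :=
  (isCahnHoffman_wulffVertex_iff_mem_wulffCone k u).trans
    (inv_phi_smul_mem_wulffFacet_iff hu k).symm

theorem IsCahnHoffman.wulffVertex_of_mem_wulffHalfFacet {k : ℕ} {N u : ℝ × ℝ}
    (h : IsCahnHoffman N u) (hN : N ∈ wulffHalfFacet k) : IsCahnHoffman (wulffVertex k) u := by
  obtain ⟨s, t, hs, ht, hst, rfl⟩ := hN
  refine ⟨phi_wulffVertex k, (dot_wulffVertex_perp_le_phiD_perp k u).antisymm ?_⟩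
  have hcomb := h.2
  rw [hexPoint, dot_add_smul_left] at hcomb
  have hnext := mul_le_mul_of_nonneg_left (dot_wulffVertex_perp_le_phiD_perp (k + 1) u) ht
  have hweights : s * phiD (perp u) + t * phiD (perp u) = phiD (perp u) := by
    rw [← add_mul, hst, one_mul]
  exact le_of_mul_le_mul_left (by linarith) hs

theorem exists_lt_three_hexPoint_eq (k : ℕ) {s t : ℝ} (h : 0 < t ∨ t = 0 ∧ 0 < s) :
    ∃ d < 3, ∃ a b, 0 < a ∧ 0 ≤ b ∧ hexPoint (k + d) a b = hexPoint k s t := by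
  rcases lt_or_ge 0 s with hs | hs
  · exact ⟨0, by norm_num, s, t, hs, h.elim le_of_lt fun h => h.1.ge, rfl⟩
  have ht : 0 < t := h.resolve_right fun h => hs.not_gt h.2
  rw [hexPoint_eq_hexPoint_succ]
  rcases lt_or_ge 0 (s + t) with hst | hst
  · exact ⟨1, by norm_num, s + t, -s, hst, neg_nonneg.mpr hs, rfl⟩
  rw [hexPoint_eq_hexPoint_succ]
  exact ⟨2, by norm_num, s + t + -s, -(s + t), by linarith, neg_nonneg.mpr hst, rfl⟩

theorem exists_lt_six_hexPoint_eq (k : ℕ) {x : ℝ × ℝ} (hx : x ≠ 0) :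
    ∃ d < 6, ∃ s t, 0 < s ∧ 0 ≤ t ∧ hexPoint (k + d) s t = x := by
  obtain ⟨s, t, rfl⟩ := exists_hexPoint_eq k x
  by_cases hupper : 0 < t ∨ t = 0 ∧ 0 < s
  · obtain ⟨d, hd, h⟩ := exists_lt_three_hexPoint_eq k hupper
    exact ⟨d, by lia, h⟩
  have hlower : 0 < -t ∨ -t = 0 ∧ 0 < -s := by
    rw [not_or, not_and, not_lt, not_lt] at hupper
    rcases hupper.1.lt_or_eq with ht | rfl
    · exact .inl (neg_pos.mpr ht)
    · have hs : s ≠ 0 := by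
        rintro rfl
        simp [hexPoint] at hx
      exact .inr ⟨neg_zero, neg_pos.mpr ((hupper.2 rfl).lt_of_ne hs)⟩
  obtain ⟨d, hd, a, b, ha, hb, hab⟩ := exists_lt_three_hexPoint_eq (k + 3) hlower
  refine ⟨3 + d, by lia, a, b, ha, hb, ?_⟩
  rw [← add_assoc, hab, hexPoint_add_three, neg_neg, neg_neg]

theorem exists_mem_wulffHalfFacet (k : ℕ) {x : ℝ × ℝ} (hx : phi x = 1) :
    ∃ d < 6, x ∈ wulffHalfFacet (k + d) := by
  have hx0 : x ≠ 0 := by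
    rintro rfl
    simp [phi] at hx
  obtain ⟨d, hd, s, t, hs, ht, rfl⟩ := exists_lt_six_hexPoint_eq k hx0
  exact ⟨d, hd, s, t, hs, ht, by rw [← hx, phi_hexPoint_of_nonneg _ hs.le ht], rfl⟩

theorem eq_two_or_four_of_phi_add_eq_one {k d : ℕ} {x y : ℝ × ℝ} (hd : d < 6)
    (hx : x ∈ wulffHalfFacet k) (hy : y ∈ wulffHalfFacet (k + d)) (hxy : phi (x + y) = 1) :
    d = 2 ∨ d = 4 := by
  obtain ⟨s, t, hs, ht, hst, rfl⟩ := hx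
  obtain ⟨a, b, ha, hb, hab, rfl⟩ := hy
  have hbound {p q : ℝ} (h : phi (hexPoint k p q) = 1) : p ≤ 1 ∧ p + q ≤ 1 := by
    rw [phi_hexPoint] at h
    exact ⟨h ▸ (le_abs_self p).trans (le_max_left _ _),
      h ▸ (le_abs_self _).trans ((le_max_right _ _).trans (le_max_right _ _))⟩
  interval_cases d
  · rw [add_zero, hexPoint_add] at hxy
    linarith [(hbound hxy).2]
  · rw [hexPoint_succ, hexPoint_add] at hxy
    linarith [(hbound hxy).2]
  · exact .inl rfl
  · rw [hexPoint_add_three, hexPoint_add, phi_hexPoint] at hxy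
    have hfst : |s + -a| < 1 := abs_lt.mpr ⟨by linarith, by linarith⟩
    have hsnd : |t + -b| < 1 := abs_lt.mpr ⟨by linarith, by linarith⟩
    have hsum : |s + -a + (t + -b)| < 1 := abs_lt.mpr ⟨by linarith, by linarith⟩
    exact absurd hxy (max_lt hfst (max_lt hsnd hsum)).ne
  · exact .inr rfl
  · rw [hexPoint_add_three (k + 2), hexPoint_succ (k + 1), hexPoint_succ, hexPoint_add] at hxy
    linarith [(hbound hxy).1]

theorem exists_perm_mem_wulffHalfFacet {N : Fin 3 → ℝ × ℝ} (hN : ∀ i, phi (N i) = 1)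
    (hsum : N 0 + N 1 + N 2 = 0) :
    ∃ k, ∃ σ : Fin 3 ≃ Fin 3, ∀ i, N i ∈ wulffHalfFacet (k + 2 * (σ i : ℕ)) := by
  have hpair {i j : Fin 3} (hij : i ≠ j) : phi (N i + N j) = 1 := by
    obtain ⟨τ, rfl, rfl⟩ : ∃ τ : Equiv.Perm (Fin 3), τ 0 = i ∧ τ 1 = j := by decide +revert
    have hτ : N (τ 0) + N (τ 1) + N (τ 2) = 0 := by
      rw [← Fin.sum_univ_three fun i => N (τ i), Equiv.sum_comp τ N, Fin.sum_univ_three, hsum]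
    rw [eq_neg_of_add_eq_zero_left hτ, phi_neg, hN]
  obtain ⟨k, -, hk⟩ := exists_mem_wulffHalfFacet 0 (hN 0)
  rw [zero_add] at hk
  have hoffset (i : Fin 3) : ∃ j : Fin 3, N i ∈ wulffHalfFacet (k + 2 * (j : ℕ)) := by
    rcases eq_or_ne i 0 with rfl | hi
    · exact ⟨0, hk⟩
    obtain ⟨d, hd, hmem⟩ := exists_mem_wulffHalfFacet k (hN i)
    rcases eq_two_or_four_of_phi_add_eq_one hd hk hmem (hpair hi.symm) with rfl | rfl
    exacts [⟨1, hmem⟩, ⟨2, hmem⟩]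
  choose σ hσ using hoffset
  have hinj : Function.Injective σ := fun i j hij => by
    by_contra hne
    have hmem : N j ∈ wulffHalfFacet (k + 2 * (σ i : ℕ) + 0) := hij ▸ hσ j
    simpa using eq_two_or_four_of_phi_add_eq_one (by norm_num) (hσ i) hmem (hpair hne)
  exact ⟨k, .ofBijective σ (Finite.injective_iff_bijective.mp hinj), hσ⟩

theorem sum_wulffVertex_perm (k : ℕ) (σ : Fin 3 ≃ Fin 3) :
    ∑ i, wulffVertex (k + 2 * (σ i : ℕ)) = 0 := by
  rw [σ.sum_comp fun j : Fin 3 => wulffVertex (k + 2 * (j : ℕ)), Fin.sum_univ_three]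
  exact wulffVertex_add_alternating k

theorem conical_triod_critical_iff_nonadjacent_facets_general
    (u : Fin 3 → ℝ × ℝ) (hu : ∀ i, u i ≠ 0) :
    (∃ N : Fin 3 → ℝ × ℝ, (∀ i, IsCahnHoffman (N i) (u i)) ∧ N 0 + N 1 + N 2 = 0) ↔
    (∃ k : ℕ, k < 6 ∧ ∃ σ : Fin 3 ≃ Fin 3,
        ∀ i, (phi (u i))⁻¹ • u i ∈ wulffFacet ((k + 2 * (σ i : ℕ)) % 6)) := by
  simp only [wulffFacet_periodic.map_mod_nat,
    ← isCahnHoffman_wulffVertex_iff_mem_wulffFacet (hu _)]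
  constructor
  · rintro ⟨N, hN, hsum⟩
    obtain ⟨k, σ, hσ⟩ := exists_perm_mem_wulffHalfFacet (fun i => (hN i).1) hsum
    refine ⟨(k + 4) % 6, Nat.mod_lt _ (by norm_num), σ, fun i => ?_⟩
    have hvertex : wulffVertex ((k + 4) % 6 + 2 * σ i + 2) = wulffVertex (k + 2 * σ i) := by
      rw [← wulffVertex_periodic.map_mod_nat, ← wulffVertex_periodic.map_mod_nat (k + _)]
      congr 1
      lia
    exact hvertex ▸ (hN i).wulffVertex_of_mem_wulffHalfFacet (hσ i)
  · rintro ⟨k, -, σ, hσ⟩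
    refine ⟨_, hσ, ?_⟩
    simpa only [Fin.sum_univ_three, add_right_comm _ _ 2] using sum_wulffVertex_perm (k + 2) σ

/-- A conical triod with half-line directions `u 0, u 1, u 2` is critical (admits a
balanced Cahn–Hoffman triple) if and only if the three points `uᵢ/φ(uᵢ) ∈ ∂B^φ` lie in
three pairwise non-adjacent facets of `∂B^φ`. -/
theorem conical_triod_critical_iff_nonadjacent_facets
    (u : Fin 3 → ℝ × ℝ)
    (hunit : ∀ i, (u i).1 ^ 2 + (u i).2 ^ 2 = 1)
    (hdist : ∀ i j, i ≠ j → u i ≠ u j) :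
    (∃ N : Fin 3 → ℝ × ℝ,
        (∀ i, phi (N i) = 1 ∧ dot (N i) (perp (u i)) = phiD (perp (u i))) ∧
        N 0 + N 1 + N 2 = 0) ↔
    (∃ k : ℕ, k < 6 ∧ ∃ σ : Fin 3 ≃ Fin 3,
        ∀ i, (phi (u i))⁻¹ • u i ∈ wulffFacet ((k + 2 * (σ i : ℕ)) % 6)) :=
  conical_triod_critical_iff_nonadjacent_facets_general u fun i hi => by simpa [hi] using hunit i
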